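/- arXiv:1501.03545 — 4 statements merged into one kernel-verified Lean document; each statement's English description precedes it below -/
import Mathlib

section
/- Let α > 0, R > 0 and i ∈ ℕ. Suppose a polar quadtree cell delimited by min_r, max_r, min_φ, max_φ (with 0 ≤ min_r ≤ max_r ≤ R and 0 ≤ min_φ ≤ max_φ ≤ 2π) satisfies max_φ − min_φ = 2π/2^i and cosh(α·max_r) − cosh(α·min_r) = (cosh(α·R) − 1)/2^i, as holds for every cell at depth i of the polar quadtree. Then the probability that a random point of the model lies in this cell, namely ∫_{min_r}^{max_r} ∫_{min_φ}^{max_φ} (1/(2π))·α·sinh(α·r)/(cosh(α·R) − 1) dφ dr, equals 4^{−i}. -/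
open Real in
/-- A polar quadtree cell at depth `i` — i.e. with angular width `2π/2^i` and with
`cosh(α·max_r) − cosh(α·min_r) = (cosh(α·R) − 1)/2^i` — contains a random point of the
model with probability exactly `4⁻ⁱ`. -/
theorem quadtree_cell_depth_probability (α R minr maxr minφ maxφ : ℝ) (i : ℕ)
    (hα : 0 < α) (hR : 0 < R)
    (h1 : 0 ≤ minr) (h2 : minr ≤ maxr) (h3 : maxr ≤ R)
    (h4 : 0 ≤ minφ) (h5 : minφ ≤ maxφ) (h6 : maxφ ≤ 2 * π)
    (hφ : maxφ - minφ = 2 * π / 2 ^ i)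
    (hr : Real.cosh (α * maxr) - Real.cosh (α * minr) = (Real.cosh (α * R) - 1) / 2 ^ i) :
    (∫ r in minr..maxr, ∫ _φ in minφ..maxφ,
        (1 / (2 * π)) * (α * Real.sinh (α * r) / (Real.cosh (α * R) - 1))) =
      ((4 : ℝ) ^ i)⁻¹ := by
  have hC : Real.cosh (α * R) - 1 ≠ 0 := by
    have : 1 < Real.cosh (α * R) := Real.one_lt_cosh.mpr (mul_pos hα hR).ne'
    linarith
  have hI : (∫ r in minr..maxr, α * Real.sinh (α * r)) =
      Real.cosh (α * maxr) - Real.cosh (α * minr) := by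
    apply intervalIntegral.integral_eq_sub_of_hasDerivAt (f := fun r => Real.cosh (α * r))
    · intro x _
      have h := ((hasDerivAt_id x).const_mul α).cosh
      simpa [mul_comm] using h
    · apply Continuous.intervalIntegrable
      fun_prop
  simp only [intervalIntegral.integral_const, smul_eq_mul, intervalIntegral.integral_const_mul,
    intervalIntegral.integral_div]
  have hI2 : α * (∫ r in minr..maxr, Real.sinh (α * r)) =
      (Real.cosh (α * R) - 1) / 2 ^ i := by
    rw [← intervalIntegral.integral_const_mul, hI, hr]
  rw [mul_left_comm α, hI2, hφ, show (4 : ℝ) = 2 * 2 by norm_num, mul_pow]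
  have := Real.pi_ne_zero
  field_simp
end

section
/- There exists N ∈ ℕ such that for all n ≥ N the following holds: if n balls are thrown independently and uniformly at random into n bins (i.e., the ball placements X₁, …, Xₙ are i.i.d. uniform on a set of n bins), then the probability that some bin receives more than 3·ln n / ln ln n balls is at most 1/n. -/
open scoped Classical in
theorem bib_card_fix (n k : ℕ) (b : Fin n) (S : Finset (Fin n)) (hS : S.card = k) :
    (Finset.univ.filter (fun f : Fin n → Fin n => ∀ i ∈ S, f i = b)).card * n ^ k = n ^ n := by
  have h : (Finset.univ.filter (fun f : Fin n → Fin n => ∀ i ∈ S, f i = b)) =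
      Fintype.piFinset (fun i => if i ∈ S then {b} else Finset.univ) := by
    ext f
    simp only [Finset.mem_filter, Finset.mem_univ, true_and, Fintype.mem_piFinset]
    refine forall_congr' fun i => ?_
    by_cases hi : i ∈ S <;> simp [hi]
  have h2 : n ^ k = ∏ i : Fin n, (if i ∈ S then n else 1) := by
    rw [Finset.prod_ite_mem]
    simp [hS]
  rw [h, Fintype.card_piFinset, h2, ← Finset.prod_mul_distrib]
  have h3 : ∀ i : Fin n, (if i ∈ S then ({b} : Finset (Fin n)) else Finset.univ).card *
      (if i ∈ S then n else 1) = n := by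
    intro i
    by_cases hi : i ∈ S <;> simp [hi]
  rw [Finset.prod_congr rfl (fun i _ => h3 i)]
  simp

open scoped Classical in
theorem bib_count (n k : ℕ) (hn : 0 < n) :
    (Finset.univ.filter (fun f : Fin n → Fin n =>
      ∃ b : Fin n, k ≤ (Finset.univ.filter (fun i : Fin n => f i = b)).card)).card
      * k.factorial ≤ n * n ^ n := by
  set B := Finset.univ.filter (fun f : Fin n → Fin n =>
      ∃ b : Fin n, k ≤ (Finset.univ.filter (fun i : Fin n => f i = b)).card) with hB
  set P := (Finset.univ : Finset (Fin n)) ×ˢ Finset.powersetCard k (Finset.univ : Finset (Fin n))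
    with hP
  have hsub : B ⊆ P.biUnion
      (fun p => Finset.univ.filter (fun f : Fin n → Fin n => ∀ i ∈ p.2, f i = p.1)) := by
    intro f hf
    obtain ⟨b, hb⟩ := (Finset.mem_filter.1 hf).2
    obtain ⟨S, hS, hc⟩ := Finset.exists_subset_card_eq hb
    refine Finset.mem_biUnion.2 ⟨(b, S), ?_, ?_⟩
    · simp [hP, Finset.mem_powersetCard, hc]
    · refine Finset.mem_filter.2 ⟨Finset.mem_univ _, fun i hi => ?_⟩
      exact (Finset.mem_filter.1 (hS hi)).2
  have h1 : B.card * n ^ k ≤ (n * n.choose k) * n ^ n := by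
    calc B.card * n ^ k ≤ (∑ p ∈ P, (Finset.univ.filter
          (fun f : Fin n → Fin n => ∀ i ∈ p.2, f i = p.1)).card) * n ^ k := by
          gcongr
          exact (Finset.card_le_card hsub).trans Finset.card_biUnion_le
      _ = ∑ p ∈ P, n ^ n := by
          rw [Finset.sum_mul]
          refine Finset.sum_congr rfl fun p hp => ?_
          refine bib_card_fix n k p.1 p.2 ?_
          exact (Finset.mem_powersetCard.1 (Finset.mem_product.1 hp).2).2
      _ = _ := by simp [hP]
  have h2 : k.factorial * n.choose k ≤ n ^ k := by
    rw [← Nat.descFactorial_eq_factorial_mul_choose]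
    exact Nat.descFactorial_le_pow n k
  have h3 : 0 < n ^ k := pow_pos hn k
  refine Nat.le_of_mul_le_mul_right ?_ h3
  calc B.card * k.factorial * n ^ k = (B.card * n ^ k) * k.factorial := by ring
    _ ≤ ((n * n.choose k) * n ^ n) * k.factorial := by gcongr
    _ = n * n ^ n * (k.factorial * n.choose k) := by ring
    _ ≤ n * n ^ n * n ^ k := by gcongr

theorem bib_fact (n k : ℕ) (hn : 0 < n) (h1 : 1 < Real.log (Real.log n))
    (h2 : Real.log (Real.log (Real.log n)) ≤ 1 / 3 * Real.log (Real.log n))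
    (hk : 3 * Real.log n / Real.log (Real.log n) ≤ k) : (n : ℝ) ^ 2 ≤ k.factorial := by
  set L := Real.log n with hL
  set M := Real.log L with hM
  have hL0 : 0 ≤ L := Real.log_natCast_nonneg n
  have hL1 : 1 < L := by
    by_contra h
    have : M ≤ 0 := Real.log_nonpos hL0 (not_lt.1 h)
    linarith
  have hLpos : 0 < L := by linarith
  have hMpos : 0 < M := by linarith
  set t := 3 * L / M with ht
  have htpos : 0 < t := by positivity
  have hkpos : (0 : ℝ) < k := lt_of_lt_of_le htpos hk
  have hlog3 : 1 ≤ Real.log 3 := by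
    rw [Real.le_log_iff_exp_le (by norm_num)]
    linarith [Real.exp_one_lt_d9]
  have hlogt : Real.log t = Real.log 3 + M - Real.log M := by
    rw [ht, Real.log_div (by positivity) (by positivity), Real.log_mul (by norm_num) (by positivity)]
  have hlt : 2 / 3 * M ≤ Real.log t - 1 := by linarith
  have hlk : Real.log t ≤ Real.log k := Real.log_le_log htpos hk
  have hmain : 2 * L ≤ k * (Real.log k - 1) := by
    calc 2 * L = t * (2 / 3 * M) := by rw [ht]; field_simp
      _ ≤ k * (Real.log k - 1) := by
        apply mul_le_mul hk (by linarith) (by positivity) hkpos.le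
  have hf : (k : ℝ) ^ k / k.factorial ≤ Real.exp k := Real.pow_div_factorial_le_exp k hkpos.le k
  have hfp : (0 : ℝ) < k.factorial := by exact_mod_cast Nat.factorial_pos k
  have hf2 : (k : ℝ) ^ k ≤ Real.exp k * k.factorial := (div_le_iff₀ hfp).1 hf
  have hf3 := Real.log_le_log (by positivity) hf2
  rw [Real.log_pow, Real.log_mul (Real.exp_pos _).ne' hfp.ne', Real.log_exp] at hf3
  have hnp : (0 : ℝ) < n := by exact_mod_cast hn
  rw [← Real.log_le_log_iff (by positivity) hfp, Real.log_pow]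
  push_cast
  linarith

open scoped Classical in
/-- Balls into bins: there is an `N` such that for all `n ≥ N`, when `n` balls are thrown
independently and uniformly at random into `n` bins (uniform random function
`Fin n → Fin n`), the probability that some bin receives more than `3 ln n / ln ln n`
balls is at most `1/n`. -/
theorem balls_into_bins_max_load :
    ∃ N : ℕ, ∀ n : ℕ, N ≤ n →
      (((Finset.univ.filter (fun f : Fin n → Fin n =>
            ∃ b : Fin n,
              3 * Real.log n / Real.log (Real.log n) <
                ((Finset.univ.filter (fun i : Fin n => f i = b)).card : ℝ))).card : ℝ) /
          (n : ℝ) ^ n) ≤ 1 / n := by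
  have hT : Filter.Tendsto (fun n : ℕ => Real.log (Real.log (n : ℝ))) Filter.atTop Filter.atTop :=
    Real.tendsto_log_atTop.comp (Real.tendsto_log_atTop.comp tendsto_natCast_atTop_atTop)
  have hE : ∀ᶠ x : ℝ in Filter.atTop, 1 < x ∧ Real.log x ≤ 1 / 3 * x := by
    have h := Real.isLittleO_log_id_atTop.bound (show (0 : ℝ) < 1 / 3 by norm_num)
    filter_upwards [h, Filter.eventually_gt_atTop 1] with x hx hx1
    refine ⟨hx1, ?_⟩
    have h0 : (0 : ℝ) < x := by linarith
    rw [id, Real.norm_eq_abs, Real.norm_eq_abs, abs_of_pos h0] at hx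
    exact (le_abs_self _).trans hx
  obtain ⟨N, hN⟩ := Filter.eventually_atTop.1 (hT.eventually hE)
  refine ⟨N + 1, fun n hn => ?_⟩
  obtain ⟨h1, h2⟩ := hN n (by omega)
  have hn0 : 0 < n := by omega
  have hnp : (0 : ℝ) < n := by exact_mod_cast hn0
  set t := 3 * Real.log n / Real.log (Real.log n) with ht
  set k := ⌈t⌉₊ with hk
  have hfac := bib_fact n k hn0 h1 h2 (Nat.le_ceil t)
  have hcount : ((Finset.univ.filter (fun f : Fin n → Fin n =>
      ∃ b : Fin n, k ≤ (Finset.univ.filter (fun i : Fin n => f i = b)).card)).card : ℝ)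
      * k.factorial ≤ n * n ^ n := by exact_mod_cast bib_count n k hn0
  have hle : ((Finset.univ.filter (fun f : Fin n → Fin n =>
            ∃ b : Fin n, t < ((Finset.univ.filter (fun i : Fin n => f i = b)).card : ℝ))).card : ℝ)
      ≤ ((Finset.univ.filter (fun f : Fin n → Fin n =>
      ∃ b : Fin n, k ≤ (Finset.univ.filter (fun i : Fin n => f i = b)).card)).card : ℝ) := by
    refine Nat.cast_le.2 (Finset.card_le_card fun f hf => ?_)
    obtain ⟨b, hb⟩ := (Finset.mem_filter.1 hf).2
    exact Finset.mem_filter.2 ⟨Finset.mem_univ _, b, Nat.ceil_le.2 hb.le⟩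
  rw [div_le_div_iff₀ (by positivity) hnp, one_mul]
  refine le_trans (mul_le_mul_of_nonneg_right hle hnp.le) ?_
  set A := ((Finset.univ.filter (fun f : Fin n → Fin n =>
      ∃ b : Fin n, k ≤ (Finset.univ.filter (fun i : Fin n => f i = b)).card)).card : ℝ)
  have hA : 0 ≤ A := Nat.cast_nonneg _
  have h5 : A * (n : ℝ) ^ 2 ≤ n * n ^ n := (mul_le_mul_of_nonneg_left hfac hA).trans hcount
  refine le_of_mul_le_mul_left ?_ hnp
  calc (n : ℝ) * (A * n) = A * (n : ℝ) ^ 2 := by ring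
    _ ≤ _ := h5
end

section
/- Let n ∈ ℕ, let p ∈ (0, 1), and let X be a binomially distributed random variable with n trials and success probability p. Then for every t with p ≤ t < 1, P(X ≥ t·n) ≤ exp(−n·H(t, p)), where H(t, p) := t·ln(t/p) + (1 − t)·ln((1 − t)/(1 − p)) is the relative entropy (Kullback–Leibler divergence) between the Bernoulli distributions with parameters t and p. -/
open scoped Classical in
/-- Relative-entropy Chernoff bound for the upper tail of a binomial random variable
`X ~ B(n, p)`: for `p ≤ t < 1`, `P(X ≥ t·n) ≤ exp(−n·H(t, p))`, where
`H(t, p) = t·ln(t/p) + (1 − t)·ln((1 − t)/(1 − p))`. -/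
theorem binomial_tail_relative_entropy_bound (n : ℕ) (p t : ℝ)
    (hp0 : 0 < p) (hp1 : p < 1) (hpt : p ≤ t) (ht1 : t < 1) :
    ∑ k ∈ (Finset.range (n + 1)).filter (fun k : ℕ => t * n ≤ (k : ℝ)),
        (n.choose k : ℝ) * p ^ k * (1 - p) ^ (n - k) ≤
      Real.exp (-(n * (t * Real.log (t / p) + (1 - t) * Real.log ((1 - t) / (1 - p))))) := by
  have ht0 : 0 < t := lt_of_lt_of_le hp0 hpt
  have hq : 0 < 1 - p := by linarith
  have hs : 0 < 1 - t := by linarith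
  set a := Real.log (t / p) with ha
  set b := Real.log ((1 - t) / (1 - p)) with hb
  have ha0 : 0 ≤ a := Real.log_nonneg (by rw [le_div_iff₀ hp0]; linarith)
  have hb0 : b ≤ 0 := Real.log_nonpos (by positivity) (by rw [div_le_iff₀ hq]; linarith)
  have hpe : p = t * Real.exp (-a) := by
    rw [Real.exp_neg, ha, Real.exp_log (by positivity)]
    field_simp
  have hqe : 1 - p = (1 - t) * Real.exp (-b) := by
    rw [Real.exp_neg, hb, Real.exp_log (by positivity)]
    field_simp
  set E := Real.exp (-(n * (t * a + (1 - t) * b))) with hE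
  have key : ∀ k ∈ (Finset.range (n + 1)).filter (fun k : ℕ => t * n ≤ (k : ℝ)),
      (n.choose k : ℝ) * p ^ k * (1 - p) ^ (n - k) ≤
        E * (t ^ k * (1 - t) ^ (n - k) * (n.choose k : ℝ)) := by
    intro k hk
    rw [Finset.mem_filter, Finset.mem_range] at hk
    obtain ⟨hk1, hk2⟩ := hk
    have hkn : k ≤ n := by omega
    have e1 : p ^ k * (1 - p) ^ (n - k) =
        Real.exp (-(k * a + (n - k) * b)) * (t ^ k * (1 - t) ^ (n - k)) := by
      have h1 : p ^ k = t ^ k * Real.exp (k * (-a)) := by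
        rw [Real.exp_nat_mul, ← mul_pow, ← hpe]
      have h2 : (1 - p) ^ (n - k) = (1 - t) ^ (n - k) * Real.exp (((n - k : ℕ) : ℝ) * (-b)) := by
        rw [Real.exp_nat_mul, ← mul_pow, ← hqe]
      have h3 : -((k : ℝ) * a + (n - k) * b) = k * (-a) + ((n - k : ℕ) : ℝ) * (-b) := by
        rw [Nat.cast_sub hkn]; ring
      rw [h1, h2, h3, Real.exp_add]; ring
    have e2 : Real.exp (-(k * a + (n - k) * b)) ≤ E := by
      apply Real.exp_le_exp.mpr
      nlinarith [mul_nonneg (sub_nonneg.mpr hk2) (by linarith : 0 ≤ a - b)]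
    rw [mul_assoc, e1]
    calc (n.choose k : ℝ) * (Real.exp (-(k * a + (n - k) * b)) * (t ^ k * (1 - t) ^ (n - k)))
        = Real.exp (-(k * a + (n - k) * b)) * (t ^ k * (1 - t) ^ (n - k) * (n.choose k : ℝ)) := by
          ring
      _ ≤ _ := mul_le_mul_of_nonneg_right e2 (by positivity)
  refine (Finset.sum_le_sum key).trans ?_
  rw [← Finset.mul_sum]
  have hsum : ∑ k ∈ (Finset.range (n + 1)).filter (fun k : ℕ => t * n ≤ (k : ℝ)),
      (t ^ k * (1 - t) ^ (n - k) * (n.choose k : ℝ)) ≤ 1 := by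
    calc _ ≤ ∑ k ∈ Finset.range (n + 1), (t ^ k * (1 - t) ^ (n - k) * (n.choose k : ℝ)) :=
          Finset.sum_le_sum_of_subset_of_nonneg (Finset.filter_subset _ _)
            (fun k _ _ => by positivity)
      _ = 1 := by rw [← add_pow]; simp
  exact mul_le_of_le_one_right (Real.exp_pos _).le hsum
end

section
/- Let c ≥ 1 be a real number and, for n ∈ ℕ with n > 4c², define b_n := n · 4^{−c·√n} · (1 + c/(√n − 2c))^{n − 2c·√n}. Then for all sufficiently large n one has b_n ≤ 0.7^{√n}; in particular b_n → 0 as n → ∞, and b_n ≤ 1 (equivalently, the quantity b_n/n is at most 1/n) for all sufficiently large n. -/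
open Filter in
/-- For `c ≥ 1` and `b_n = n · 4^{−c√n} · (1 + c/(√n − 2c))^{n − 2c√n}`: for all
sufficiently large `n`, `b_n ≤ 0.7^{√n}`; in particular `b_n → 0`, and `b_n ≤ 1`
(equivalently `b_n / n ≤ 1/n`) for all sufficiently large `n`. -/
theorem bn_decays (c : ℝ) (hc : 1 ≤ c) :
    let b : ℕ → ℝ := fun n =>
      (n : ℝ) * (4 : ℝ) ^ (-(c * Real.sqrt n)) *
        (1 + c / (Real.sqrt n - 2 * c)) ^ ((n : ℝ) - 2 * c * Real.sqrt n)
    (∀ᶠ n : ℕ in atTop, b n ≤ (0.7 : ℝ) ^ Real.sqrt n) ∧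
      Tendsto b atTop (nhds 0) ∧
      (∀ᶠ n : ℕ in atTop, b n ≤ 1) := by
  intro b
  have hs : Tendsto (fun n : ℕ => Real.sqrt n) atTop atTop :=
    Real.tendsto_sqrt_atTop.comp tendsto_natCast_atTop_atTop
  have he := Real.exp_one_lt_d9
  have hd : 1 < Real.log 2.8 := by
    rw [Real.lt_log_iff_exp_lt (by norm_num)]
    linarith
  have h07 : Real.log 0.7 = Real.log 2.8 - Real.log 4 := by
    rw [← Real.log_div (by norm_num) (by norm_num)]
    norm_num
  have h4 : 1 < Real.log 4 := by
    rw [Real.lt_log_iff_exp_lt (by norm_num)]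
    linarith
  have hO := (isLittleO_pow_exp_pos_mul_atTop 2 (sub_pos.2 hd)).bound one_pos
  have key : ∀ᶠ n : ℕ in atTop, 0 ≤ b n ∧ b n ≤ (0.7 : ℝ) ^ Real.sqrt n := by
    filter_upwards [hs.eventually hO, hs.eventually_gt_atTop (2 * c)] with n h1 h2
    have hn : (n : ℝ) = Real.sqrt n ^ 2 := (Real.sq_sqrt (Nat.cast_nonneg n)).symm
    simp only [b]
    generalize Real.sqrt n = s at *
    rw [hn]
    have hsc : 0 < s - 2 * c := by linarith
    have hs0 : 0 < s := by linarith
    have hq : 0 < c / (s - 2 * c) := div_pos (by linarith) hsc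
    refine ⟨by positivity, ?_⟩
    have h3 : s ^ 2 ≤ Real.exp ((Real.log 2.8 - 1) * s) := by
      simpa [abs_of_pos hs0] using h1
    have h5 : (1 + c / (s - 2 * c)) ^ (s ^ 2 - 2 * c * s) ≤ Real.exp (c * s) := by
      have h6 : 1 + c / (s - 2 * c) ≤ Real.exp (c / (s - 2 * c)) := by
        linarith [Real.add_one_le_exp (c / (s - 2 * c))]
      have h7 : 0 ≤ s ^ 2 - 2 * c * s := by nlinarith
      refine (Real.rpow_le_rpow (by positivity) h6 h7).trans_eq ?_
      rw [← Real.exp_mul]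
      congr 1
      rw [show s ^ 2 - 2 * c * s = (s - 2 * c) * s by ring, ← mul_assoc, div_mul_cancel₀ _ hsc.ne']
    rw [Real.rpow_def_of_pos (by norm_num : (0:ℝ) < 4),
      Real.rpow_def_of_pos (by norm_num : (0:ℝ) < 0.7)]
    calc _ ≤ Real.exp ((Real.log 2.8 - 1) * s) * Real.exp (Real.log 4 * -(c * s))
            * Real.exp (c * s) := by gcongr
      _ ≤ _ := by
        rw [← Real.exp_add, ← Real.exp_add, h07]
        apply Real.exp_le_exp.2
        nlinarith [mul_nonneg (mul_nonneg (sub_nonneg.2 hc) (sub_nonneg.2 h4.le)) hs0.le]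
  refine ⟨key.mono fun _ h => h.2, ?_, ?_⟩
  · have ht := (tendsto_rpow_atTop_of_base_lt_one (0.7 : ℝ) (by norm_num) (by norm_num)).comp hs
    exact tendsto_of_tendsto_of_tendsto_of_le_of_le' tendsto_const_nhds ht
      (key.mono fun _ h => h.1) (key.mono fun _ h => h.2)
  · exact key.mono fun n h => h.2.trans
      (Real.rpow_le_one (by norm_num) (by norm_num) (Real.sqrt_nonneg _))
end
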